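/- Under Assumptions 1 and 2, the function F is strongly convex and possesses a unique global minimizer ĥ ∈ ℝ^N, and the MM subspace iterates (h_n)_{n≥1} converge to ĥ. -/

import Mathlib

open Matrix Filter Topology

noncomputable section

/-- Identification of `EuclideanSpace ℝ (Fin N)` with plain tuples `Fin N → ℝ`. -/
def toEuc {N : ℕ} (v : Fin N → ℝ) : EuclideanSpace ℝ (Fin N) :=
  (WithLp.equiv 2 (Fin N → ℝ)).symm v

def ofEuc {N : ℕ} (v : EuclideanSpace ℝ (Fin N)) : Fin N → ℝ :=
  WithLp.equiv 2 (Fin N → ℝ) v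

/-- The quadratic form `vᵀ M v`. -/
def qf {N : ℕ} (M : Matrix (Fin N) (Fin N) ℝ)
    (v : EuclideanSpace ℝ (Fin N)) : ℝ :=
  ofEuc v ⬝ᵥ M.mulVec (ofEuc v)

/-- Matrix-vector product `M v`, viewed in `EuclideanSpace`. -/
def mulE {N : ℕ} (M : Matrix (Fin N) (Fin N) ℝ)
    (v : EuclideanSpace ℝ (Fin N)) : EuclideanSpace ℝ (Fin N) :=
  toEuc (M.mulVec (ofEuc v))

/-- The range of the matrix `D`, i.e. `{D u : u ∈ ℝ^M}`, as a subset of `EuclideanSpace`. -/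
def rangeD {N M : ℕ} (D : Matrix (Fin N) (Fin M) ℝ) : Set (EuclideanSpace ℝ (Fin N)) :=
  {x | ∃ u : Fin M → ℝ, x = toEuc (D.mulVec u)}

open scoped Classical in
/-- The Moore–Penrose pseudo-inverse of a real matrix, defined via its characterizing
(Penrose) equations; it exists and is unique for every real matrix. -/
def pinv {m n : ℕ} (A : Matrix (Fin m) (Fin n) ℝ) : Matrix (Fin n) (Fin m) ℝ :=
  if h : ∃ B : Matrix (Fin n) (Fin m) ℝ,
      A * B * A = A ∧ B * A * B = B ∧ (A * B)ᵀ = A * B ∧ (B * A)ᵀ = B * A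
  then h.choose else 0

end

section helpers
variable {N : ℕ}

lemma dot_eq_inner (a b : EuclideanSpace ℝ (Fin N)) : ofEuc a ⬝ᵥ ofEuc b = inner ℝ a b := by
  simp [ofEuc, dotProduct, PiLp.inner_apply, mul_comm]

lemma qf_eq (M : Matrix (Fin N) (Fin N) ℝ) (x : EuclideanSpace ℝ (Fin N)) :
    qf M x = inner ℝ x (mulE M x) := by
  rw [← dot_eq_inner]; rfl

lemma mulE_eq (M : Matrix (Fin N) (Fin N) ℝ) (x : EuclideanSpace ℝ (Fin N)) :
    mulE M x = (LinearMap.toContinuousLinearMap (Matrix.toEuclideanLin M)) x := rfl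

lemma mulE_add (M : Matrix (Fin N) (Fin N) ℝ) (x y : EuclideanSpace ℝ (Fin N)) :
    mulE M (x + y) = mulE M x + mulE M y := by simp only [mulE_eq, map_add]

lemma mulE_sub (M : Matrix (Fin N) (Fin N) ℝ) (x y : EuclideanSpace ℝ (Fin N)) :
    mulE M (x - y) = mulE M x - mulE M y := by simp only [mulE_eq, map_sub]

lemma mulE_smul (M : Matrix (Fin N) (Fin N) ℝ) (c : ℝ) (x : EuclideanSpace ℝ (Fin N)) :
    mulE M (c • x) = c • mulE M x := by simp only [mulE_eq, map_smul]

lemma add_mulE (M M' : Matrix (Fin N) (Fin N) ℝ) (x : EuclideanSpace ℝ (Fin N)) :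
    mulE (M + M') x = mulE M x + mulE M' x := by
  simp [mulE_eq]

lemma sub_mulE (M M' : Matrix (Fin N) (Fin N) ℝ) (x : EuclideanSpace ℝ (Fin N)) :
    mulE (M - M') x = mulE M x - mulE M' x := by
  simp [mulE_eq]

lemma continuous_mulE (M : Matrix (Fin N) (Fin N) ℝ) : Continuous (mulE M) :=
  (LinearMap.toContinuousLinearMap (Matrix.toEuclideanLin M)).continuous

lemma inner_mulE_comm {M : Matrix (Fin N) (Fin N) ℝ} (hM : M.PosSemidef)
    (x y : EuclideanSpace ℝ (Fin N)) : inner ℝ x (mulE M y) = inner ℝ y (mulE M x) := by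
  have hs : Mᵀ = M := by simpa [Matrix.IsHermitian] using hM.1
  rw [← dot_eq_inner, ← dot_eq_inner]
  change ofEuc x ⬝ᵥ M *ᵥ (ofEuc y) = ofEuc y ⬝ᵥ M *ᵥ (ofEuc x)
  rw [dotProduct_comm, ← Matrix.vecMul_transpose, hs, Matrix.dotProduct_mulVec]

lemma qf_nonneg {M : Matrix (Fin N) (Fin N) ℝ} (hM : M.PosSemidef)
    (x : EuclideanSpace ℝ (Fin N)) : 0 ≤ qf M x := by
  have := hM.dotProduct_mulVec_nonneg (ofEuc x)
  simpa [qf] using this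

/-- entrywise l1 norm -/
def entrySum (M : Matrix (Fin N) (Fin N) ℝ) : ℝ := ∑ i, ∑ j, |M i j|

lemma entrySum_nonneg (M : Matrix (Fin N) (Fin N) ℝ) : 0 ≤ entrySum M :=
  Finset.sum_nonneg fun _ _ => Finset.sum_nonneg fun _ _ => abs_nonneg _

lemma inner_mulE_le (M : Matrix (Fin N) (Fin N) ℝ) (x y : EuclideanSpace ℝ (Fin N)) :
    |inner ℝ x (mulE M y)| ≤ entrySum M * (‖x‖ * ‖y‖) := by
  have h1 : inner ℝ x (mulE M y) = ∑ i, ∑ j, x i * (M i j * y j) := by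
    rw [← dot_eq_inner]
    change ofEuc x ⬝ᵥ M *ᵥ (ofEuc y) = _
    simp [ofEuc, dotProduct, Matrix.mulVec, Finset.mul_sum]
  rw [h1, entrySum, Finset.sum_mul]
  refine (Finset.abs_sum_le_sum_abs _ _).trans (Finset.sum_le_sum fun i _ => ?_)
  rw [Finset.sum_mul]
  refine (Finset.abs_sum_le_sum_abs _ _).trans (Finset.sum_le_sum fun j _ => ?_)
  have hx : |x i| ≤ ‖x‖ := PiLp.norm_apply_le x i
  have hy : |y j| ≤ ‖y‖ := PiLp.norm_apply_le y j
  rw [abs_mul, abs_mul]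
  calc |x i| * (|M i j| * |y j|) = |M i j| * (|x i| * |y j|) := by ring
    _ ≤ _ := by gcongr

lemma qf_abs_le (M : Matrix (Fin N) (Fin N) ℝ) (x : EuclideanSpace ℝ (Fin N)) :
    |qf M x| ≤ entrySum M * ‖x‖ ^ 2 := by
  rw [qf_eq, sq]; exact inner_mulE_le M x x

lemma norm_mulE_le (M : Matrix (Fin N) (Fin N) ℝ) (x : EuclideanSpace ℝ (Fin N)) :
    ‖mulE M x‖ ≤ entrySum M * ‖x‖ := by
  have h1 := (le_abs_self _).trans (inner_mulE_le M (mulE M x) x)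
  rw [real_inner_self_eq_norm_sq] at h1
  by_contra! hlt
  have h0 : 0 < ‖mulE M x‖ :=
    lt_of_le_of_lt (mul_nonneg (entrySum_nonneg M) (norm_nonneg _)) hlt
  nlinarith

lemma add_qf (M M' : Matrix (Fin N) (Fin N) ℝ) (x : EuclideanSpace ℝ (Fin N)) :
    qf (M + M') x = qf M x + qf M' x := by
  simp only [qf_eq, add_mulE, inner_add_right]

lemma sub_qf (M M' : Matrix (Fin N) (Fin N) ℝ) (x : EuclideanSpace ℝ (Fin N)) :
    qf (M - M') x = qf M x - qf M' x := by
  simp only [qf_eq, sub_mulE, inner_sub_right]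

lemma qf_smul (M : Matrix (Fin N) (Fin N) ℝ) (c : ℝ) (x : EuclideanSpace ℝ (Fin N)) :
    qf M (c • x) = c ^ 2 * qf M x := by
  simp only [qf_eq, mulE_smul, inner_smul_left, inner_smul_right]; simp; ring

lemma qf_combo (M : Matrix (Fin N) (Fin N) ℝ) (x y : EuclideanSpace ℝ (Fin N)) (a b : ℝ)
    (hab : a + b = 1) :
    qf M (a • x + b • y) = a * qf M x + b * qf M y - a * b * qf M (x - y) := by
  have : b = 1 - a := by linarith
  subst this
  simp only [qf_eq, mulE_add, mulE_sub, mulE_smul, inner_add_left, inner_add_right,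
    inner_sub_left, inner_sub_right, inner_smul_left, inner_smul_right]
  simp; ring

lemma qf_sub_expand {M : Matrix (Fin N) (Fin N) ℝ} (hM : M.PosSemidef)
    (x y : EuclideanSpace ℝ (Fin N)) :
    qf M y = qf M x + 2 * inner ℝ (mulE M x) (y - x) + qf M (y - x) := by
  have h1 := inner_mulE_comm hM x y
  simp only [qf_eq, mulE_sub, inner_sub_left, inner_sub_right]
  rw [real_inner_comm y (mulE M x), real_inner_comm x (mulE M x)]
  linarith

lemma posDef_lower (hN : 0 < N) {M : Matrix (Fin N) (Fin N) ℝ} (hM : M.PosDef) :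
    ∃ m : ℝ, 0 < m ∧ ∀ x, m * ‖x‖ ^ 2 ≤ qf M x := by
  have : Nonempty (Fin N) := ⟨⟨0, hN⟩⟩
  have hcont : Continuous (qf M) := by
    have : qf M = fun x => inner ℝ x (mulE M x) := funext (qf_eq M)
    rw [this]
    exact continuous_id.inner (continuous_mulE M)
  obtain ⟨z, hz, hmin⟩ := (isCompact_sphere (0 : EuclideanSpace ℝ (Fin N)) 1).exists_isMinOn
    (NormedSpace.sphere_nonempty.2 zero_le_one) hcont.continuousOn
  have hz1 : ‖z‖ = 1 := by simpa using hz
  refine ⟨qf M z, ?_, fun x => ?_⟩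
  · have hz0 : ofEuc z ≠ 0 := by
      intro h0
      have : z = 0 := (WithLp.equiv 2 (Fin N → ℝ)).injective h0
      rw [this] at hz1; simp at hz1
    have := hM.dotProduct_mulVec_pos hz0
    simpa [qf] using this
  · by_cases hx : x = 0
    · subst hx; simp [qf_eq]
    have hn : ‖x‖ ≠ 0 := norm_ne_zero_iff.2 hx
    have := hmin (show ‖x‖⁻¹ • x ∈ Metric.sphere (0 : EuclideanSpace ℝ (Fin N)) 1 by
      simp [norm_smul, hn])
    have h2 : qf M z ≤ qf M (‖x‖⁻¹ • x) := this
    rw [qf_smul] at h2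
    calc qf M z * ‖x‖ ^ 2 ≤ (‖x‖⁻¹ ^ 2 * qf M x) * ‖x‖ ^ 2 := by gcongr
      _ = qf M x := by field_simp

lemma convex_grad_ineq {f : EuclideanSpace ℝ (Fin N) → ℝ} (hf : ConvexOn ℝ Set.univ f)
    {x g : EuclideanSpace ℝ (Fin N)} (hg : HasGradientAt f g x) (y : EuclideanSpace ℝ (Fin N)) :
    f x + inner ℝ g (y - x) ≤ f y := by
  have hφ : ConvexOn ℝ Set.univ (f ∘ AffineMap.lineMap (k := ℝ) x y) := by
    simpa using hf.comp_affineMap (AffineMap.lineMap x y)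
  have hd : HasDerivAt (f ∘ AffineMap.lineMap (k := ℝ) x y) (inner ℝ g (y - x)) 0 := by
    have h1 : HasDerivAt (AffineMap.lineMap (k := ℝ) x y) (y - x) (0 : ℝ) :=
      AffineMap.hasDerivAt_lineMap
    have h2 := hg.hasFDerivAt
    have h3 : HasFDerivAt f ((InnerProductSpace.toDual ℝ _) g)
      (AffineMap.lineMap (k := ℝ) x y (0 : ℝ)) := by simpa using h2
    simpa using h3.comp_hasDerivAt (0 : ℝ) h1
  have := hφ.le_slope_of_hasDerivAt (Set.mem_univ 0) (Set.mem_univ 1) one_pos hd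
  simp [slope_def_field] at this
  linarith

lemma hasGradientAt_quad {M : Matrix (Fin N) (Fin N) ℝ} (hM : M.PosSemidef)
    (b : EuclideanSpace ℝ (Fin N)) {Ψ : EuclideanSpace ℝ (Fin N) → ℝ}
    {x g : EuclideanSpace ℝ (Fin N)} (hg : HasGradientAt Ψ g x)
    {f : EuclideanSpace ℝ (Fin N) → ℝ}
    (hf : ∀ x, f x = (1/2) * qf M x - ofEuc b ⬝ᵥ ofEuc x + Ψ x) :
    HasGradientAt f (mulE M x - b + g) x := by
  have hfe : f = fun x => (1/2 : ℝ) * inner ℝ x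
      ((LinearMap.toContinuousLinearMap (Matrix.toEuclideanLin M)) x) - inner ℝ b x + Ψ x := by
    funext x; rw [hf, qf_eq, dot_eq_inner]; rfl
  rw [hfe, hasGradientAt_iff_hasFDerivAt]
  have h1 := ((hasFDerivAt_id (𝕜 := ℝ) x).inner ℝ
    (LinearMap.toContinuousLinearMap (Matrix.toEuclideanLin M)).hasFDerivAt).const_mul (1/2 : ℝ)
  have h2 := (hasFDerivAt_const b x).inner ℝ (hasFDerivAt_id (𝕜 := ℝ) x)
  refine ((h1.sub h2).add hg.hasFDerivAt).congr_fderiv ?_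
  ext v
  have h3 := inner_mulE_comm hM x v
  rw [mulE_eq, mulE_eq] at h3
  simp [mulE_eq, fderivInnerCLM_apply, inner_add_left, inner_sub_left] at h3 ⊢
  rw [h3, real_inner_comm v]
  ring

lemma summable_descent {u a e : ℕ → ℝ} {c : ℝ} (hc : ∀ n, c ≤ u n) (ha : ∀ n, 0 ≤ a n)
    (he0 : ∀ n, 0 ≤ e n) (he : Summable e) (hu : ∀ n, u (n + 1) + a n ≤ u n + e n) :
    Tendsto a atTop (𝓝 0) := by
  refine Summable.tendsto_atTop_zero
    (summable_of_sum_range_le (c := u 0 - c + ∑' n, e n) ha fun n => ?_)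
  have h1 : u n + ∑ i ∈ Finset.range n, a i ≤ u 0 + ∑ i ∈ Finset.range n, e i := by
    induction n with
    | zero => simp
    | succ k ih => rw [Finset.sum_range_succ, Finset.sum_range_succ]; linarith [hu k]
  have h2 := he.sum_le_tsum (Finset.range n) (fun i _ => he0 i)
  linarith [hc n]

lemma rangeD_sub_smul {K : ℕ} {D : Matrix (Fin N) (Fin K) ℝ} {x y : EuclideanSpace ℝ (Fin N)}
    (hx : x ∈ rangeD D) (hy : y ∈ rangeD D) (t : ℝ) : x - t • y ∈ rangeD D := by
  obtain ⟨u, rfl⟩ := hx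
  obtain ⟨v, rfl⟩ := hy
  refine ⟨u - t • v, ?_⟩
  rw [Matrix.mulVec_sub, Matrix.mulVec_smul]; rfl

lemma lin_zero {p q : ℝ} (H : ∀ t : ℝ, 0 ≤ t * p + t ^ 2 * q) : p = 0 := by
  by_contra hp
  have hq : 0 < |q| + 1 := by positivity
  have h1 := H (-p / (|q| + 1))
  have h2 : 0 < p ^ 2 := by positivity
  have h3 : -p / (|q| + 1) * p + (-p / (|q| + 1)) ^ 2 * q
      = p ^ 2 / (|q| + 1) ^ 2 * (q - (|q| + 1)) := by field_simp; ring
  rw [h3] at h1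
  have h4 : 0 < p ^ 2 / (|q| + 1) ^ 2 := by positivity
  have h5 : q - (|q| + 1) < 0 := by linarith [le_abs_self q]
  nlinarith [mul_pos h4 (neg_pos.2 h5)]

end helpers

theorem mm_iterates_converge_to_unique_minimizer
    {N : ℕ} (hN : 0 < N)
    (R : Matrix (Fin N) (Fin N) ℝ) (hRpd : R.PosDef)
    (r : EuclideanSpace ℝ (Fin N))
    (Ψ : EuclideanSpace ℝ (Fin N) → ℝ)
    (hΨbdd : BddBelow (Set.range Ψ))
    (hΨconv : ConvexOn ℝ Set.univ Ψ)
    (hΨC2 : ContDiff ℝ 2 Ψ)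
    (gradΨ : EuclideanSpace ℝ (Fin N) → EuclideanSpace ℝ (Fin N))
    (hgradΨ : ∀ x, HasGradientAt Ψ (gradΨ x) x)
    (hessΨ : EuclideanSpace ℝ (Fin N) → Matrix (Fin N) (Fin N) ℝ)
    (hhessΨ : ∀ x, HasFDerivAt gradΨ
      (LinearMap.toContinuousLinearMap (Matrix.toEuclideanLin (hessΨ x))) x)
    (F : EuclideanSpace ℝ (Fin N) → ℝ)
    (hF : ∀ x, F x = (1/2) * qf R x - ofEuc r ⬝ᵥ ofEuc x + Ψ x)
    (Rn : ℕ → Matrix (Fin N) (Fin N) ℝ) (hRnpsd : ∀ n, (Rn n).PosSemidef)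
    (rn : ℕ → EuclideanSpace ℝ (Fin N))
    (Fn : ℕ → EuclideanSpace ℝ (Fin N) → ℝ)
    (hFn : ∀ n x, Fn n x = (1/2) * qf (Rn n) x - ofEuc (rn n) ⬝ᵥ ofEuc x + Ψ x)
    (B : EuclideanSpace ℝ (Fin N) → Matrix (Fin N) (Fin N) ℝ)
    (hBpsd : ∀ x, (B x).PosSemidef)
    (An : ℕ → EuclideanSpace ℝ (Fin N) → Matrix (Fin N) (Fin N) ℝ)
    (hAn : ∀ n x, An n x = Rn n + B x)
    (gradFn : ℕ → EuclideanSpace ℝ (Fin N) → EuclideanSpace ℝ (Fin N))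
    (hgradFn : ∀ n x, HasGradientAt (Fn n) (gradFn n x) x)
    (Θ : ℕ → EuclideanSpace ℝ (Fin N) → EuclideanSpace ℝ (Fin N) → ℝ)
    (hΘ : ∀ n x y, Θ n x y =
      Fn n y + ofEuc (gradFn n y) ⬝ᵥ ofEuc (x - y) + (1/2) * qf (An n y) (x - y))
    (M : ℕ → ℕ) (D : (n : ℕ) → Matrix (Fin N) (Fin (M n)) ℝ)
    (h : ℕ → EuclideanSpace ℝ (Fin N))
    (halg : ∀ n, h (n+1) ∈ rangeD (D n) ∧
      ∀ y ∈ rangeD (D n), Θ n (h (n+1)) (h n) ≤ Θ n y (h n))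
    (hmaj : ∀ n x, Fn n x ≤ Θ n x (h n))
    (ha1r : Summable (fun n => ‖rn n - rn (n+1)‖))
    (ha1R : ∀ i j, Summable (fun n => |Rn n i j - Rn (n+1) i j|))
    (ha1rlim : Tendsto rn atTop (𝓝 r))
    (ha1Rlim : ∀ i j, Tendsto (fun n => Rn n i j) atTop (𝓝 (R i j)))
    (ha2i : ∀ n, gradFn n (h n) ∈ rangeD (D n) ∧ h n ∈ rangeD (D n))
    (V : Matrix (Fin N) (Fin N) ℝ) (hVpd : V.PosDef)
    (ha2ii : ∀ x, (B x - hessΨ x).PosSemidef ∧ (V - B x).PosSemidef)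
    (ha2iii : (∀ n, rn n = r ∧ Rn n = R) ∨
      (∃ c : ℝ, ∀ x, ‖mulE (B x) x - gradΨ x‖ ≤ c))
    :
    (∃ m : ℝ, 0 < m ∧ StrongConvexOn Set.univ m F) ∧
    ∃ hhat : EuclideanSpace ℝ (Fin N),
      (∀ x, F hhat ≤ F x) ∧ (∀ y, (∀ x, F y ≤ F x) → y = hhat) ∧
      Tendsto h atTop (𝓝 hhat) := by
  obtain ⟨m, hm, hRm⟩ := posDef_lower hN hRpd
  obtain ⟨cΨ, hcΨ⟩ := hΨbdd
  have hcΨ : ∀ x, cΨ ≤ Ψ x := fun x => hcΨ ⟨x, rfl⟩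
  have hRps := hRpd.posSemidef
  have hgrad : ∀ n x, gradFn n x = mulE (Rn n) x - rn n + gradΨ x := fun n x =>
    (hgradFn n x).unique (hasGradientAt_quad (hRnpsd n) (rn n) (hgradΨ x) (hFn n))
  -- strong convexity
  have hsc : StrongConvexOn Set.univ m F := by
    refine ⟨convex_univ, fun x _ y _ a b ha hb hab => ?_⟩
    have h1 := hΨconv.2 (Set.mem_univ x) (Set.mem_univ y) ha hb hab
    have h2 := qf_combo R x y a b hab
    have h3 := hRm (x - y)
    have h4 : a * b * (m * ‖x - y‖ ^ 2) ≤ a * b * qf R (x - y) :=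
      mul_le_mul_of_nonneg_left h3 (mul_nonneg ha hb)
    simp only [smul_eq_mul] at h1 ⊢
    rw [hF, hF, hF, h2]
    simp only [dot_eq_inner, inner_add_right, inner_smul_right]
    nlinarith
  -- gradient inequality for `F`
  have hFgrad : ∀ x y, F x + inner ℝ (mulE R x - r + gradΨ x) (y - x) + m / 2 * ‖y - x‖ ^ 2
      ≤ F y := by
    intro x y
    have h1 := convex_grad_ineq hΨconv (hgradΨ x) y
    have h2 := qf_sub_expand hRps x y
    have h3 := hRm (y - x)
    rw [hF, hF, h2]
    have h4 : inner ℝ r (y - x) = inner ℝ r y - inner ℝ r x := inner_sub_right _ _ _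
    simp only [dot_eq_inner, inner_add_left, inner_sub_left]
    linarith
  -- existence of a minimizer
  have hFcont : Continuous F := by
    have : F = fun x => (1/2 : ℝ) * inner ℝ x (mulE R x) - inner ℝ r x + Ψ x := by
      funext x; rw [hF, qf_eq, dot_eq_inner]
    rw [this]
    exact ((continuous_const.mul (continuous_id.inner (continuous_mulE R))).sub
      (continuous_const.inner continuous_id)).add hΨC2.continuous
  have hcoer : Tendsto F (cocompact _) atTop := by
    have h1 : Tendsto (fun t : ℝ => t * (m / 2 * t + -‖r‖) + cΨ) atTop atTop := by
      refine tendsto_atTop_add_const_right _ _ (tendsto_id.atTop_mul_atTop₀ ?_)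
      exact tendsto_atTop_add_const_right _ _ (tendsto_id.const_mul_atTop (by positivity))
    refine tendsto_atTop_mono (fun x => ?_)
      (h1.comp (tendsto_norm_cocompact_atTop (E := EuclideanSpace ℝ (Fin N))))
    have h2 := hRm x
    have h3 := hcΨ x
    have h4 := real_inner_le_norm r x
    simp only [Function.comp]
    rw [hF, dot_eq_inner]
    nlinarith
  obtain ⟨z, hz⟩ := hFcont.exists_forall_le hcoer
  have hdist : ∀ x, ‖z - x‖ ≤ 2 / m * ‖mulE R x - r + gradΨ x‖ := by
    intro x
    have h1 := hFgrad x z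
    have h2 := hz x
    have h3 := (abs_le.1 (abs_real_inner_le_norm (mulE R x - r + gradΨ x) (z - x))).1
    set g := ‖mulE R x - r + gradΨ x‖
    have h4 : ‖z - x‖ * (m / 2 * ‖z - x‖ - g) ≤ 0 := by nlinarith
    by_contra! hlt
    have h5 : 0 < ‖z - x‖ := lt_of_le_of_lt (by positivity) hlt
    have h6 : g < m / 2 * ‖z - x‖ := by
      have := mul_lt_mul_of_pos_left hlt (by positivity : 0 < m / 2)
      have h7 : m / 2 * (2 / m * g) = g := by field_simp
      linarith
    nlinarith [mul_pos h5 (sub_pos.2 h6)]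
  refine ⟨⟨m, hm, hsc⟩, z, hz, fun y hy => ?_, ?_⟩
  · -- uniqueness, from strong convexity at the midpoint
    have h1 := hsc.2 (Set.mem_univ y) (Set.mem_univ z) (by norm_num : (0 : ℝ) ≤ 1/2)
      (by norm_num : (0 : ℝ) ≤ 1/2) (by norm_num)
    have h2 := hy z
    have h3 := hz ((1/2 : ℝ) • y + (1/2 : ℝ) • z)
    simp only [smul_eq_mul] at h1
    have h4 : m * ‖y - z‖ ^ 2 ≤ 0 := by linarith
    have h5 : ‖y - z‖ ^ 2 ≤ 0 := by
      by_contra! hlt; linarith [mul_pos hm hlt]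
    have h6 : ‖y - z‖ = 0 := by nlinarith [norm_nonneg (y - z)]
    exact sub_eq_zero.1 (norm_eq_zero.1 h6)
  -- convergence
  suffices hG : Tendsto (fun n => mulE R (h n) - r + gradΨ (h n)) atTop (𝓝 0) by
    have h1 : Tendsto (fun n => 2 / m * ‖mulE R (h n) - r + gradΨ (h n)‖) atTop (𝓝 0) := by
      simpa using hG.norm.const_mul (2 / m)
    rw [tendsto_iff_norm_sub_tendsto_zero]
    refine squeeze_zero (fun _ => norm_nonneg _) (fun n => ?_) h1
    rw [norm_sub_rev]; exact hdist (h n)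
  -- bound on the curvature
  have hRlim : Tendsto (fun n => entrySum (Rn n)) atTop (𝓝 (entrySum R)) :=
    tendsto_finsetSum _ fun i _ => tendsto_finsetSum _ fun j _ => (ha1Rlim i j).abs
  have hRdiff : Tendsto (fun n => entrySum (R - Rn n)) atTop (𝓝 0) := by
    have : Tendsto (fun n => entrySum (R - Rn n)) atTop
        (𝓝 (∑ i : Fin N, ∑ j : Fin N, |R i j - R i j|)) :=
      tendsto_finsetSum _ fun i _ => tendsto_finsetSum _ fun j _ =>
        (tendsto_const_nhds.sub (ha1Rlim i j)).abs
    simpa using this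
  obtain ⟨ρ, hρ⟩ := hRlim.bddAbove_range
  have hρ : ∀ n, entrySum (Rn n) ≤ ρ := fun n => hρ ⟨n, rfl⟩
  have hρ0 : 0 ≤ ρ := (entrySum_nonneg _).trans (hρ 0)
  obtain ⟨L, hLdef⟩ : ∃ L, L = ρ + entrySum V + 1 := ⟨_, rfl⟩
  have hL : 0 < L := by have := entrySum_nonneg V; linarith
  have hA : ∀ n x v, qf (An n x) v ≤ L * ‖v‖ ^ 2 := by
    intro n x v
    rw [hAn, add_qf]
    have h1 := (le_abs_self _).trans (qf_abs_le (Rn n) v)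
    have h2 := (le_abs_self _).trans (qf_abs_le V v)
    have h3 := qf_nonneg (ha2ii x).2 v
    rw [sub_qf] at h3
    have h4 := mul_le_mul_of_nonneg_right (hρ n) (sq_nonneg ‖v‖)
    have h5 := sq_nonneg ‖v‖
    rw [hLdef]; nlinarith
  -- sufficient decrease
  have hdec : ∀ n, Fn n (h (n+1)) + 1 / (2 * L) * ‖gradFn n (h n)‖ ^ 2 ≤ Fn n (h n) := by
    intro n
    have h1 := hmaj n (h (n+1))
    have h2 := (halg n).2 _ (rangeD_sub_smul (ha2i n).2 (ha2i n).1 (1 / L))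
    rw [hΘ n (h n - (1 / L) • gradFn n (h n)) (h n)] at h2
    have h3 : h n - (1 / L) • gradFn n (h n) - h n = (-(1 / L)) • gradFn n (h n) := by
      rw [neg_smul]; abel
    rw [h3, dot_eq_inner, qf_smul, inner_smul_right, real_inner_self_eq_norm_sq] at h2
    have h4 := mul_le_mul_of_nonneg_left (hA n (h n) (gradFn n (h n))) (sq_nonneg (-(1 / L)))
    have h5 : (-(1 / L)) ^ 2 * (L * ‖gradFn n (h n)‖ ^ 2) = 1 / L * ‖gradFn n (h n)‖ ^ 2 := by
      field_simp
    have h6 : 1 / (2 * L) * ‖gradFn n (h n)‖ ^ 2 = 1 / 2 * (1 / L * ‖gradFn n (h n)‖ ^ 2) := by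
      field_simp
    rw [h6]; linarith
  have key : ∀ (c : ℝ) (e : ℕ → ℝ), (∀ n, c ≤ Fn n (h n)) → (∀ n, 0 ≤ e n) → Summable e →
      (∀ n, Fn (n+1) (h (n+1)) ≤ Fn n (h (n+1)) + e n) →
      Tendsto (fun n => gradFn n (h n)) atTop (𝓝 0) := by
    intro c e hc he0 he hstep
    have h1 := summable_descent (u := fun n => Fn n (h n))
      (a := fun n => 1 / (2 * L) * ‖gradFn n (h n)‖ ^ 2) (e := e) hc
      (fun n => by positivity) he0 he
      (fun n => by have := hdec n; have := hstep n; linarith)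
    have h2 := h1.const_mul (2 * L)
    have h3 : Tendsto (fun n => ‖gradFn n (h n)‖ ^ 2) atTop (𝓝 0) := by
      rw [mul_zero] at h2
      refine h2.congr fun n => ?_
      field_simp
    have h4 := h3.sqrt
    simp only [Real.sqrt_zero, Real.sqrt_sq (norm_nonneg _)] at h4
    exact tendsto_zero_iff_norm_tendsto_zero.2 h4
  rcases ha2iii with hst | ⟨c, hc⟩
  · have hFe : ∀ n x, Fn n x = F x := fun n x => by rw [hFn, hF, (hst n).1, (hst n).2]
    have := key (F z) (fun _ => 0) (fun n => by rw [hFe]; exact hz _) (fun _ => le_rfl)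
      summable_zero (fun n => by rw [hFe, hFe]; simp)
    refine this.congr fun n => ?_
    rw [hgrad, (hst n).1, (hst n).2]
  -- boundedness of the iterates
  obtain ⟨b, hb⟩ := ha1rlim.norm.bddAbove_range
  have hb : ∀ n, ‖rn n‖ ≤ b := fun n => hb ⟨n, rfl⟩
  have hbdd : BddAbove (Set.range fun n => ‖h (n+1)‖) := by
    refine Filter.IsBoundedUnder.bddAbove_range ⟨2 / m * (c + b), ?_⟩
    rw [Filter.eventually_map]
    filter_upwards [hRdiff.eventually (gt_mem_nhds (by positivity : 0 < m / 2))] with n hn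
    have hopt : inner ℝ (gradFn n (h n)) (h (n+1))
        + inner ℝ (h (n+1)) (mulE (An n (h n)) (h (n+1) - h n)) = 0 := by
      refine lin_zero (q := (1/2) * qf (An n (h n)) (h (n+1))) fun t => ?_
      have h1 := (halg n).2 _ (rangeD_sub_smul (halg n).1 (halg n).1 (-t))
      have hAps : (An n (h n)).PosSemidef := by rw [hAn]; exact (hRnpsd n).add (hBpsd _)
      rw [hΘ, hΘ] at h1
      have h2 : h (n+1) - (-t) • h (n+1) - h n = (h (n+1) - h n) + t • h (n+1) := by
        rw [neg_smul]; abel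
      have h3 := inner_mulE_comm hAps (h (n+1) - h n) (h (n+1))
      rw [h2] at h1
      generalize h (n+1) - h n = d at *
      simp only [dot_eq_inner, qf_eq, mulE_add, mulE_smul, inner_add_left, inner_add_right,
        inner_smul_left, inner_smul_right, conj_trivial] at h1 ⊢
      rw [h3] at h1
      linarith
    have hid : gradFn n (h n) = mulE (An n (h n)) (h n) -
        ((mulE (B (h n)) (h n) - gradΨ (h n)) + rn n) := by
      rw [hgrad, hAn, add_mulE]; abel
    rw [hid, mulE_sub, inner_sub_left, inner_sub_right, ← qf_eq, hAn, add_qf,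
      real_inner_comm (h (n+1)) (mulE _ _)] at hopt
    have h1 := qf_nonneg (hBpsd (h n)) (h (n+1))
    have h2 : m / 2 * ‖h (n+1)‖ ^ 2 ≤ qf (Rn n) (h (n+1)) := by
      have h3 := (le_abs_self _).trans (qf_abs_le (R - Rn n) (h (n+1)))
      rw [sub_qf] at h3
      have h4 := hRm (h (n+1))
      have h5 := mul_le_mul_of_nonneg_right hn.le (sq_nonneg ‖h (n+1)‖)
      linarith
    have h6 := real_inner_le_norm ((mulE (B (h n)) (h n) - gradΨ (h n)) + rn n) (h (n+1))
    have h7 : ‖(mulE (B (h n)) (h n) - gradΨ (h n)) + rn n‖ ≤ c + b :=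
      (norm_add_le _ _).trans (add_le_add (hc _) (hb n))
    have h8 := mul_le_mul_of_nonneg_right h7 (norm_nonneg (h (n+1)))
    have h9 : m / 2 * ‖h (n+1)‖ ^ 2 ≤ (c + b) * ‖h (n+1)‖ := by linarith
    have hcb : 0 ≤ c + b := (norm_nonneg _).trans h7
    by_contra! hlt
    have h10 : 0 < ‖h (n+1)‖ := lt_of_le_of_lt (by positivity) hlt
    have h11 := mul_lt_mul_of_pos_left hlt (by positivity : 0 < m / 2)
    have h12 : m / 2 * (2 / m * (c + b)) = c + b := by field_simp
    rw [h12] at h11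
    nlinarith [mul_pos h10 (sub_pos.2 h11)]
  obtain ⟨C, hC⟩ : ∃ C, ∀ n, ‖h n‖ ≤ C := by
    obtain ⟨C, hC⟩ := hbdd
    refine ⟨max C ‖h 0‖, fun n => ?_⟩
    cases n with
    | zero => exact le_max_right _ _
    | succ k => exact (hC ⟨k, rfl⟩).trans (le_max_left _ _)
  have hC0 : 0 ≤ C := (norm_nonneg _).trans (hC 0)
  have hb0 : 0 ≤ b := (norm_nonneg _).trans (hb 0)
  have hsumR : Summable fun n => entrySum (Rn n - Rn (n+1)) :=
    summable_sum fun i _ => summable_sum fun j _ => ha1R i j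
  have hg0 : Tendsto (fun n => gradFn n (h n)) atTop (𝓝 0) := by
    refine key (-(b * C) + cΨ) (fun n => 1/2 * C ^ 2 * entrySum (Rn n - Rn (n+1))
      + C * ‖rn n - rn (n+1)‖) (fun n => ?_) (fun n => ?_)
      ((hsumR.mul_left _).add (ha1r.mul_left _)) (fun n => ?_)
    · have h1 := qf_nonneg (hRnpsd n) (h n)
      have h2 := real_inner_le_norm (rn n) (h n)
      have h3 := mul_le_mul (hb n) (hC n) (norm_nonneg _) hb0
      have h4 := hcΨ (h n)
      rw [hFn, dot_eq_inner]; linarith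
    · have := entrySum_nonneg (Rn n - Rn (n+1))
      positivity
    · have h1 := (abs_le.1 (qf_abs_le (Rn n - Rn (n+1)) (h (n+1)))).1
      rw [sub_qf] at h1
      have h2 := real_inner_le_norm (rn n - rn (n+1)) (h (n+1))
      rw [inner_sub_left] at h2
      have h3 := mul_le_mul_of_nonneg_left (hC (n+1)) (norm_nonneg (rn n - rn (n+1)))
      have h4 := mul_le_mul_of_nonneg_left (pow_le_pow_left₀ (norm_nonneg _) (hC (n+1)) 2)
        (entrySum_nonneg (Rn n - Rn (n+1)))
      rw [hFn, hFn, dot_eq_inner, dot_eq_inner]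
      linarith
  have hd0 : Tendsto (fun n => mulE (R - Rn n) (h n)) atTop (𝓝 0) := by
    have h1 : Tendsto (fun n => entrySum (R - Rn n) * C) atTop (𝓝 0) := by
      simpa using hRdiff.mul_const C
    refine squeeze_zero_norm (fun n => (norm_mulE_le _ _).trans ?_) h1
    exact mul_le_mul_of_nonneg_left (hC n) (entrySum_nonneg _)
  have hr0 : Tendsto (fun n => rn n - r) atTop (𝓝 0) := by
    simpa using ha1rlim.sub_const r
  have := (hg0.add hd0).add hr0
  simp only [add_zero] at this
  refine this.congr fun n => ?_
  rw [hgrad, sub_mulE]; abel
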